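/- For every natural number N there exist constants C(N) and C'(N), depending only on N, with the following property. Let F_q be a finite field with q elements and characteristic p, let f ∈ F_q[t][x] be a square-free polynomial with deg_x f ≤ N and deg_t f ≤ N, and let a, b, c ∈ F_q[t] with gcd(a,b) = 1 and deg a, deg b, deg c ≤ N. Assume that either (i) p > C(N), or (ii) a ≠ 0 and the rational function b/a does not lie in the subfield F_q(t^p) of F_q(t). Then the number of pairs (β₁, β₂) ∈ F_q² such that f(t, a(t)β₁ + b(t)β₂ + c(t)) is not square-free in F_q[t] is at most C'(N)·q. In particular, if q > C'(N) then there exist β₁, β₂ ∈ F_q such that f(t, a(t)β₁ + b(t)β₂ + c(t)) is square-free. -/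

import Mathlib

/-- The condition that the rational function `b/a ∈ F(t)` does not lie in the subfield
`F(t^p)` generated over (the image of) `F` by `t^p`, where `p = ringChar F`. -/
def notInFtp (F : Type*) [Field F] (a b : Polynomial F) : Prop :=
  (algebraMap (Polynomial F) (RatFunc F)) b / (algebraMap (Polynomial F) (RatFunc F)) a ∉
    Subfield.closure (Set.range (RatFunc.C (K := F)) ∪ {RatFunc.X ^ ringChar F})

/-!
If `u a + v b = 1`, then `x = a B₀ + b B₁ + c`, `y = -v B₀ + u B₁` is an invertible change of
variables over `F[t]`. Hence `G = f(t, a B₀ + b B₁ + c) ∈ F[B₀, B₁][t]` is square-free, and each of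
its irreducible factors is of the form `h(t, a B₀ + b B₁ + c)` with `h ∈ F[t][x]` irreducible.

No irreducible factor `P` of positive degree in `t` satisfies `∂P/∂t = 0`. If `p` exceeds the
`t`-degree of `G`, this is immediate. Otherwise the Wronskian `a b′ - a′ b` does not
vanish, since for coprime `a`, `b` it is zero only if `a′ = b′ = 0`. The chain rule
`∂P/∂t = h_t + h_x (a′ B₀ + b′ B₁ + c′)` then turns `∂P/∂t = 0` into `h_t = h_x = 0`, so that `h` is
a `p`-th power.

Therefore the product of the leading coefficient of `G` and of the resultant of `G` and `∂G/∂t` is a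
nonzero polynomial in `B₀, B₁` of bounded degree, which vanishes wherever the specialization of `G`
is not separable, and the Schwartz–Zippel lemma bounds the number of its zeros.
-/

open Polynomial

namespace SquarefreeValues

section Resultant

theorem separable_map_of_resultant_derivative_ne_zero {R K : Type*} [CommRing R] [Field K]
    (φ : R →+* K) {g : R[X]}
    (h : φ (g.leadingCoeff * resultant g (derivative g)) ≠ 0) : (g.map φ).Separable := by
  obtain ⟨u, v, -, -, huv⟩ := exists_mul_add_mul_eq_C_resultant g (derivative g)
    (n := (derivative g).natDegree + 1) le_rfl (Nat.le_succ _) (Or.inr (Nat.succ_ne_zero _))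
  rw [resultant_add_right_deg _ _ _ _ 1 le_rfl, coeff_natDegree, pow_one] at huv
  generalize g.leadingCoeff * resultant g (derivative g) = r at h huv
  have huv' : g.map φ * u.map φ + derivative (g.map φ) * v.map φ = C (φ r) := by
    simpa using congrArg (Polynomial.map φ) huv
  have hr : C (φ r)⁻¹ * C (φ r) = 1 := by rw [← C_mul, inv_mul_cancel₀ h, C_1]
  refine ⟨C (φ r)⁻¹ * u.map φ, C (φ r)⁻¹ * v.map φ, ?_⟩
  rw [← hr, ← huv']
  ring

theorem exists_irreducible_dvd_not_isCoprime_map {R K : Type*} [CommRing R] [IsDomain R]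
    [WfDvdMonoid R] [CommSemiring K] (φ : R →+* K) {f : R} {g : K} (hf : f ≠ 0)
    (h : ¬ IsCoprime (φ f) g) : ∃ P, Irreducible P ∧ P ∣ f ∧ ¬ IsCoprime (φ P) g := by
  induction f using WfDvdMonoid.induction_on_irreducible with
  | zero => exact absurd rfl hf
  | unit u hu => exact absurd (isCoprime_one_left.of_isCoprime_of_dvd_left
      (isUnit_iff_dvd_one.mp (hu.map φ))) h
  | mul a P ha hP ih =>
    by_cases hPg : IsCoprime (φ P) g
    · have hag : ¬ IsCoprime (φ a) g := fun hag => h (by rw [map_mul]; exact hPg.mul_left hag)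
      obtain ⟨Q, hQ, hQa, hQg⟩ := ih ha hag
      exact ⟨Q, hQ, hQa.mul_left P, hQg⟩
    · exact ⟨P, hP, dvd_mul_right P a, hPg⟩

theorem exists_irreducible_dvd_dvd_of_resultant_eq_zero {R : Type*} [CommRing R] [IsDomain R]
    [UniqueFactorizationMonoid R] {f g : R[X]} (hf : f ≠ 0) (h : resultant f g = 0) :
    ∃ P, Irreducible P ∧ P.natDegree ≠ 0 ∧ P ∣ f ∧ P ∣ g := by
  let K := FractionRing R
  have hinj : Function.Injective (algebraMap R K) := IsFractionRing.injective R K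
  have hcop : ¬ IsCoprime (mapRingHom (algebraMap R K) f) (g.map (algebraMap R K)) := by
    refine (resultant_eq_zero_iff.mp ?_).2
    rw [coe_mapRingHom, natDegree_map_eq_of_injective hinj, natDegree_map_eq_of_injective hinj,
      resultant_map_map, h, map_zero]
  obtain ⟨P, hP, hPf, hPg⟩ := exists_irreducible_dvd_not_isCoprime_map _ hf hcop
  rw [coe_mapRingHom] at hPg
  have hdeg : P.natDegree ≠ 0 := by
    intro hdeg
    obtain ⟨r, rfl⟩ := natDegree_eq_zero.mp hdeg
    have hr : algebraMap R K r ≠ 0 := by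
      rw [map_ne_zero_iff _ hinj]
      rintro rfl
      exact hP.ne_zero C_0
    rw [map_C] at hPg
    exact hPg (isCoprime_one_left.of_isCoprime_of_dvd_left
      (isUnit_iff_dvd_one.mp (isUnit_C.mpr hr.isUnit)))
  have hprim := hP.isPrimitive hdeg
  have hirr := (hprim.irreducible_iff_irreducible_map_fraction_map (K := K)).mp hP
  exact ⟨P, hP, hdeg, hPf, hprim.dvd_of_fraction_map_dvd_fraction_map
    (hirr.dvd_iff_not_isCoprime.mpr hPg)⟩

theorem resultant_derivative_ne_zero_of_squarefree {R : Type*} [CommRing R] [IsDomain R]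
    [UniqueFactorizationMonoid R] {g : R[X]} (hg : Squarefree g)
    (h : ∀ P, Irreducible P → P ∣ g → derivative P = 0 → P.natDegree = 0) :
    resultant g (derivative g) ≠ 0 := by
  intro hres
  obtain ⟨P, hP, hdeg, ⟨k, rfl⟩, hPg'⟩ :=
    exists_irreducible_dvd_dvd_of_resultant_eq_zero hg.ne_zero hres
  have hPk : ¬ P ∣ k := fun hPk => hP.not_isUnit (hg P (mul_dvd_mul_left P hPk))
  rw [derivative_mul, dvd_add_left (dvd_mul_right _ _)] at hPg'
  have hPP' : P ∣ derivative P := (hP.prime.dvd_or_dvd hPg').resolve_right hPk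
  exact hdeg (h P hP (dvd_mul_right _ _) (dvd_derivative_iff.mp hPP'))

theorem natDegree_eq_zero_of_derivative_eq_zero_of_lt {R : Type*} [CommSemiring R]
    [NoZeroDivisors R] (p : ℕ) [CharP R p] {f : R[X]} (hf : f.natDegree < p)
    (h : derivative f = 0) : f.natDegree = 0 := by
  rw [← expand_contract p h (by lia), natDegree_expand] at hf ⊢
  by_contra hne
  exact hf.not_ge (Nat.le_mul_of_pos_left p (Nat.pos_of_ne_zero (left_ne_zero_of_mul hne)))

end Resultant

section TotalDegree

variable {σ R : Type*}

/-- `CoeffTotalDegreeLE d G` bounds by `d` the degree of `G ∈ R[B][t]` in the variables `B`: every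
coefficient of `G`, seen as a polynomial in `t`, has total degree at most `d`. -/
def CoeffTotalDegreeLE [CommSemiring R] (d : ℕ) (G : (MvPolynomial σ R)[X]) : Prop :=
  ∀ n, (G.coeff n).totalDegree ≤ d

namespace CoeffTotalDegreeLE

section CommSemiring

variable [CommSemiring R] {d e : ℕ} {G H : (MvPolynomial σ R)[X]}

theorem mono (hde : d ≤ e) (hG : CoeffTotalDegreeLE d G) : CoeffTotalDegreeLE e G :=
  fun n => (hG n).trans hde

theorem add (hG : CoeffTotalDegreeLE d G) (hH : CoeffTotalDegreeLE d H) :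
    CoeffTotalDegreeLE d (G + H) := fun n => by
  rw [coeff_add]
  exact (MvPolynomial.totalDegree_add _ _).trans (max_le (hG n) (hH n))

theorem sum {ι : Type*} {s : Finset ι} {G : ι → (MvPolynomial σ R)[X]}
    (hG : ∀ i ∈ s, CoeffTotalDegreeLE d (G i)) : CoeffTotalDegreeLE d (∑ i ∈ s, G i) := fun n => by
  rw [finsetSum_coeff]
  exact MvPolynomial.totalDegree_finsetSum_le fun i hi => hG i hi n

theorem mul (hG : CoeffTotalDegreeLE d G) (hH : CoeffTotalDegreeLE e H) :
    CoeffTotalDegreeLE (d + e) (G * H) := fun n => by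
  rw [coeff_mul]
  exact MvPolynomial.totalDegree_finsetSum_le fun i _ =>
    (MvPolynomial.totalDegree_mul _ _).trans (add_le_add (hG _) (hH _))

theorem map_C (c : R[X]) : CoeffTotalDegreeLE 0 (c.map (MvPolynomial.C (σ := σ))) := fun n => by
  rw [coeff_map, MvPolynomial.totalDegree_C]

theorem C {r : MvPolynomial σ R} (hr : r.totalDegree ≤ d) :
    CoeffTotalDegreeLE d (Polynomial.C r) := fun n => by
  rw [coeff_C]
  split_ifs <;> simp [hr]

theorem pow (hG : CoeffTotalDegreeLE d G) (n : ℕ) : CoeffTotalDegreeLE (n * d) (G ^ n) := by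
  induction n with
  | zero => simpa using C (d := 0) (MvPolynomial.totalDegree_one (σ := σ) (R := R)).le
  | succ n ih => simpa only [pow_succ, add_mul, one_mul] using ih.mul hG

theorem derivative (hG : CoeffTotalDegreeLE d G) :
    CoeffTotalDegreeLE d (Polynomial.derivative G) := fun n => by
  have hcast : (n + 1 : MvPolynomial σ R) = MvPolynomial.C (n + 1 : R) := by simp
  rw [coeff_derivative, hcast]
  refine (MvPolynomial.totalDegree_mul _ _).trans ?_
  rw [MvPolynomial.totalDegree_C, add_zero]
  exact hG _

end CommSemiring

end CoeffTotalDegreeLE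

theorem totalDegree_X_le [CommSemiring R] (i : σ) :
    (MvPolynomial.X i : MvPolynomial σ R).totalDegree ≤ 1 :=
  (MvPolynomial.totalDegree_monomial_le _ _).trans_eq (by simp)

theorem totalDegree_det_le [CommRing R] {n : Type*} [Fintype n] [DecidableEq n] {d : ℕ}
    {M : Matrix n n (MvPolynomial σ R)} (hM : ∀ i j, (M i j).totalDegree ≤ d) :
    M.det.totalDegree ≤ Fintype.card n * d := by
  rw [Matrix.det_apply]
  refine MvPolynomial.totalDegree_finsetSum_le fun τ _ => ?_
  calc (Equiv.Perm.sign τ • ∏ i, M (τ i) i).totalDegree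
      ≤ (∏ i, M (τ i) i).totalDegree := MvPolynomial.totalDegree_smul_le _ _
    _ ≤ ∑ i, (M (τ i) i).totalDegree := MvPolynomial.totalDegree_finsetProd _ _
    _ ≤ Fintype.card n * d := Finset.sum_le_card_nsmul _ _ d fun i _ => hM _ _

theorem CoeffTotalDegreeLE.totalDegree_resultant_le [CommRing R] {d : ℕ}
    {G H : (MvPolynomial σ R)[X]} (hG : CoeffTotalDegreeLE d G) (hH : CoeffTotalDegreeLE d H)
    (m n : ℕ) : (resultant G H m n).totalDegree ≤ (m + n) * d := by
  refine (totalDegree_det_le fun i j => ?_).trans_eq (by rw [Fintype.card_fin])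
  rw [sylvester, Matrix.of_apply]
  induction j using Fin.addCases with
  | left j =>
    rw [Fin.addCases_left]
    split_ifs
    exacts [hH _, by simp]
  | right j =>
    rw [Fin.addCases_right]
    split_ifs
    exacts [hG _, by simp]

theorem card_filter_eval_eq_zero_le [CommRing R] [IsDomain R] [Fintype R] [DecidableEq R] {n : ℕ}
    {p : MvPolynomial (Fin (n + 1)) R} (hp : p ≠ 0) :
    Finset.card {x : Fin (n + 1) → R | MvPolynomial.eval x p = 0} ≤
      p.totalDegree * Fintype.card R ^ n := by
  have h := MvPolynomial.schwartz_zippel_totalDegree hp (Finset.univ : Finset R)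
  have hR : (0 : ℚ≥0) < Fintype.card R := by exact_mod_cast Fintype.card_pos
  rw [Finset.card_univ, Fintype.piFinset_univ, div_le_iff₀ (by positivity), pow_succ',
    ← mul_assoc, div_mul_cancel₀ _ hR.ne'] at h
  exact_mod_cast h

theorem ncard_eval_pair_eq_zero_le [CommRing R] [IsDomain R] [Fintype R]
    {p : MvPolynomial (Fin 2) R} (hp : p ≠ 0) :
    Set.ncard {β : R × R | MvPolynomial.eval ![β.1, β.2] p = 0} ≤
      p.totalDegree * Fintype.card R := by
  classical
  have h := card_filter_eval_eq_zero_le hp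
  rw [pow_one, ← Set.ncard_coe_finset] at h
  refine le_trans (Set.ncard_le_ncard_of_injOn (finTwoArrowEquiv R).symm (fun β hβ => ?_)
    (finTwoArrowEquiv R).symm.injective.injOn (Finset.finite_toSet _)) h
  simpa using hβ

theorem ncard_not_squarefree_map_eval_le {F : Type*} [Field F] [Fintype F]
    {g : (MvPolynomial (Fin 2) F)[X]} {d e : ℕ} (hg0 : g ≠ 0) (hg : CoeffTotalDegreeLE d g)
    (hdeg : g.natDegree ≤ e) (hres : resultant g (derivative g) ≠ 0) :
    Set.ncard {β : F × F | ¬ Squarefree (g.map (MvPolynomial.eval ![β.1, β.2]))} ≤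
      (d + (e + e) * d) * Fintype.card F := by
  let D := g.leadingCoeff * resultant g (derivative g)
  have hD : D ≠ 0 := mul_ne_zero (leadingCoeff_ne_zero.mpr hg0) hres
  have hsub : {β : F × F | ¬ Squarefree (g.map (MvPolynomial.eval ![β.1, β.2]))} ⊆
      {β | MvPolynomial.eval ![β.1, β.2] D = 0} := fun β hβ => by_contra fun h =>
    hβ (separable_map_of_resultant_derivative_ne_zero _ h).squarefree
  have hD_le : D.totalDegree ≤ d + (e + e) * d := by
    have hg' : (derivative g).natDegree ≤ e :=
      (natDegree_derivative_le g).trans ((Nat.sub_le _ _).trans hdeg)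
    refine (MvPolynomial.totalDegree_mul _ _).trans (add_le_add (hg _) ?_)
    refine (hg.totalDegree_resultant_le hg.derivative _ _).trans ?_
    gcongr
  calc Set.ncard {β : F × F | ¬ Squarefree (g.map (MvPolynomial.eval ![β.1, β.2]))}
      ≤ Set.ncard {β : F × F | MvPolynomial.eval ![β.1, β.2] D = 0} := Set.ncard_le_ncard hsub
    _ ≤ D.totalDegree * Fintype.card F := ncard_eval_pair_eq_zero_le hD
    _ ≤ (d + (e + e) * d) * Fintype.card F := Nat.mul_le_mul_right _ hD_le

theorem exists_notMem_of_ncard_le_mul_card {α : Type*} [Fintype α] {s : Set (α × α)} {n : ℕ}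
    (hs : s.ncard ≤ n * Fintype.card α) (hn : n < Fintype.card α) : ∃ β, β ∉ s := by
  by_contra! hall
  rw [Set.eq_univ_of_forall hall, Set.ncard_univ, Nat.card_eq_fintype_card,
    Fintype.card_prod] at hs
  exact hn.not_ge (Nat.le_of_mul_le_mul_right hs (Nat.zero_lt_of_lt hn))

end TotalDegree

section PartialDerivative

open scoped Polynomial.Bivariate

/-- The partial derivative `∂f/∂t` of `f ∈ R[t][x]`, which differentiates the coefficients of `f`;
the partial derivative `∂f/∂x` is `derivative f`. -/
noncomputable def innerDerivative {R : Type*} [CommRing R] : Derivation R R[X][Y] R[X][Y] :=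
  PolynomialModule.equivPolynomialSelf.compDer derivative'.mapCoeffs

theorem coeff_innerDerivative {R : Type*} [CommRing R] (f : R[X][Y]) (n : ℕ) :
    (innerDerivative f).coeff n = derivative (f.coeff n) := rfl

theorem innerDerivative_monomial {R : Type*} [CommRing R] (n : ℕ) (r : R[X]) :
    innerDerivative (monomial n r) = monomial n (derivative r) := by
  ext1 m
  rw [coeff_innerDerivative, coeff_monomial, coeff_monomial]
  split_ifs <;> simp

theorem derivative_eval₂_mapRingHom {R S : Type*} [CommRing R] [CommRing S] (φ : R →+* S)
    (L : S[X]) (f : R[X][Y]) :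
    derivative (eval₂ (mapRingHom φ) L f) = eval₂ (mapRingHom φ) L (innerDerivative f) +
      eval₂ (mapRingHom φ) L (derivative f) * derivative L := by
  induction f using Polynomial.induction_on' with
  | add f g hf hg =>
    simp only [eval₂_add, map_add, hf, hg]
    ring
  | monomial n r =>
    rw [innerDerivative_monomial, derivative_monomial, eval₂_monomial, eval₂_monomial,
      eval₂_monomial, derivative_mul, derivative_pow, coe_mapRingHom, derivative_map]
    simp only [Polynomial.map_mul, Polynomial.map_natCast, map_natCast]
    ring

theorem not_irreducible_of_partial_derivatives_eq_zero {R : Type*} [CommRing R] [IsDomain R]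
    (p : ℕ) [Fact p.Prime] [CharP R p] [PerfectRing R p] {h : R[X][Y]}
    (ht : innerDerivative h = 0) (hx : derivative h = 0) : ¬ Irreducible h := by
  have hp : p ≠ 0 := (Fact.out : p.Prime).ne_zero
  have hlift : contract p h ∈ lifts (frobenius R[X] p) := by
    rw [lifts_iff_coeff_lifts]
    intro n
    rw [coeff_contract hp]
    have hn : derivative (h.coeff (n * p)) = 0 := by rw [← coeff_innerDerivative, ht, coeff_zero]
    rw [← expand_contract p hn hp, polynomial_expand_eq]
    exact ⟨_, frobenius_def _ _⟩
  obtain ⟨k, hk : k.map (frobenius R[X] p) = contract p h⟩ := hlift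
  rw [← expand_contract p hx hp, ← hk, ← map_expand, map_frobenius_expand]
  exact not_irreducible_pow (Fact.out : p.Prime).ne_one

end PartialDerivative

theorem squarefree_map_mulEquiv {M N : Type*} [Monoid M] [Monoid N] (e : M ≃* N) {r : M}
    (hr : Squarefree r) : Squarefree (e r) := fun s hs => by
  have h := hr (e.symm s) (by simpa using map_dvd e.symm hs)
  simpa using h.map e

theorem natDegree_eq_zero_of_dvd_C {R : Type*} [Semiring R] [NoZeroDivisors R] {r : R}
    (hr : r ≠ 0) {g : R[X]} (hg : g ∣ C r) : g.natDegree = 0 :=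
  Nat.eq_zero_of_le_zero ((natDegree_le_of_dvd hg (C_ne_zero.mpr hr)).trans_eq (natDegree_C r))

theorem squarefree_C {R : Type*} [CommSemiring R] [IsDomain R] {r : R} (hr : Squarefree r) :
    Squarefree (C r) := fun s hs => by
  obtain ⟨x, rfl⟩ := natDegree_eq_zero.mp
    (natDegree_eq_zero_of_dvd_C hr.ne_zero (dvd_of_mul_right_dvd hs))
  rw [← C_mul, C_dvd_iff_dvd_coeff] at hs
  exact (hr x (by simpa using hs 0)).map C

section GenericValue

open scoped Polynomial.Bivariate

variable {F : Type*}

/-- The linear form `a B₀ + b B₁ + c ∈ F[B₀, B₁][t]`, whose coefficients `B₀`, `B₁` are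
indeterminates. -/
noncomputable def genericForm [CommRing F] (a b c : F[X]) : (MvPolynomial (Fin 2) F)[X] :=
  a.map MvPolynomial.C * C (MvPolynomial.X 0) + b.map MvPolynomial.C * C (MvPolynomial.X 1) +
    c.map MvPolynomial.C

/-- The value `f(t, a B₀ + b B₁ + c) ∈ F[B₀, B₁][t]` of `f ∈ F[t][x]` at the generic linear form;
the polynomials `f(t, a β₁ + b β₂ + c)` are its specializations at `(B₀, B₁) = (β₁, β₂)`. -/
noncomputable def genericValue [CommRing F] (a b c : F[X]) (f : F[X][Y]) :
    (MvPolynomial (Fin 2) F)[X] :=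
  eval₂ (mapRingHom MvPolynomial.C) (genericForm a b c) f

section CommRing

variable [CommRing F] (a b c : F[X])

theorem map_eval_genericValue (f : F[X][Y]) (β : F × F) :
    (genericValue a b c f).map (MvPolynomial.eval ![β.1, β.2]) =
      eval (a * C β.1 + b * C β.2 + c) f := by
  have hid : (MvPolynomial.eval ![β.1, β.2]).comp MvPolynomial.C = RingHom.id F := by
    ext; simp
  rw [← coe_mapRingHom, genericValue, hom_eval₂, mapRingHom_comp, hid]
  simp [genericForm, Polynomial.map_map, hid, mapRingHom_id, eval₂_id]

variable {a b c} in
theorem natDegree_genericForm_le {k : ℕ} (ha : a.natDegree ≤ k) (hb : b.natDegree ≤ k)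
    (hc : c.natDegree ≤ k) : (genericForm a b c).natDegree ≤ k := by
  refine natDegree_add_le_of_degree_le (natDegree_add_le_of_degree_le ?_ ?_)
    (natDegree_map_le.trans hc)
  · exact (natDegree_mul_C_le _ _).trans (natDegree_map_le.trans ha)
  · exact (natDegree_mul_C_le _ _).trans (natDegree_map_le.trans hb)

variable {a b c} in
theorem natDegree_genericValue_le {f : F[X][Y]} {k m n : ℕ} (hm : f.natDegree ≤ m)
    (hn : ∀ i, (f.coeff i).natDegree ≤ n) (hk : (genericForm a b c).natDegree ≤ k) :
    (genericValue a b c f).natDegree ≤ n + m * k := by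
  rw [genericValue, eval₂_eq_sum_range' _ (Nat.lt_succ_of_le hm)]
  refine natDegree_sum_le_of_forall_le _ _ fun i hi => ?_
  refine natDegree_mul_le.trans (add_le_add (natDegree_map_le.trans (hn i)) ?_)
  exact natDegree_pow_le.trans (Nat.mul_le_mul (Nat.lt_succ_iff.mp (Finset.mem_range.mp hi)) hk)

theorem coeffTotalDegreeLE_genericForm : CoeffTotalDegreeLE 1 (genericForm a b c) := by
  have hX (r : F[X]) (i : Fin 2) :
      CoeffTotalDegreeLE 1 (r.map MvPolynomial.C * C (MvPolynomial.X i)) :=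
    (CoeffTotalDegreeLE.map_C r).mul (CoeffTotalDegreeLE.C (totalDegree_X_le i))
  exact ((hX a 0).add (hX b 1)).add ((CoeffTotalDegreeLE.map_C c).mono zero_le_one)

theorem coeffTotalDegreeLE_genericValue {f : F[X][Y]} {m : ℕ} (hf : f.natDegree ≤ m) :
    CoeffTotalDegreeLE m (genericValue a b c f) := by
  rw [genericValue, eval₂_eq_sum_range]
  refine CoeffTotalDegreeLE.sum fun i hi => ?_
  refine ((CoeffTotalDegreeLE.map_C _).mul
    ((coeffTotalDegreeLE_genericForm a b c).pow i)).mono ?_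
  have := Finset.mem_range.mp hi
  lia

variable (u v : F[X])

/-- The affine substitution `x = a B₀ + b B₁ + c`, `y = -v B₀ + u B₁`, as a homomorphism
`F[t][x][y] → F[B₀, B₁][t]`. -/
noncomputable def substitution : F[X][Y][X] →+* (MvPolynomial (Fin 2) F)[X] :=
  eval₂RingHom (eval₂RingHom (mapRingHom MvPolynomial.C) (genericForm a b c))
    (genericForm (-v) u 0)

/-- The affine substitution `B₀ = u (x - c) - b y`, `B₁ = v (x - c) + a y`, inverse to
`substitution a b c u v` when `u a + v b = 1`. -/
noncomputable def inverseSubstitution : (MvPolynomial (Fin 2) F)[X] →+* F[X][Y][X] :=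
  eval₂RingHom (S := F[X][Y][X])
    (MvPolynomial.eval₂Hom ((C.comp C).comp C)
      ![C (C u * (X - C c)) - C (C b) * X, C (C v * (X - C c)) + C (C a) * X])
    (C (C X))

theorem substitution_C (f : F[X][Y]) :
    substitution a b c u v (C f) = genericValue a b c f := by
  simp [substitution, genericValue]

theorem inverseSubstitution_map_C (r : F[X]) :
    inverseSubstitution a b c u v (r.map MvPolynomial.C) = C (C r) := by
  have h : (inverseSubstitution a b c u v).comp (mapRingHom MvPolynomial.C) =
      (C : F[X][Y] →+* F[X][Y][X]).comp C := by
    ext <;> simp [inverseSubstitution]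
  exact DFunLike.congr_fun h r

theorem inverseSubstitution_genericForm (r s q : F[X]) :
    inverseSubstitution a b c u v (genericForm r s q) =
      C (C r) * (C (C u * (X - C c)) - C (C b) * X) +
        C (C s) * (C (C v * (X - C c)) + C (C a) * X) + C (C q) := by
  simp only [genericForm, map_add, map_mul, inverseSubstitution_map_C]
  simp [inverseSubstitution]

variable {u v}

theorem substitution_comp_inverseSubstitution (huv : u * a + v * b = 1) :
    (substitution a b c u v).comp (inverseSubstitution a b c u v) = RingHom.id _ := by
  have h : u.map (MvPolynomial.C (σ := Fin 2)) * a.map MvPolynomial.C +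
      v.map MvPolynomial.C * b.map MvPolynomial.C = 1 := by
    simpa using congrArg (map MvPolynomial.C) huv
  ext i : 2
  · ext; simp [inverseSubstitution, substitution]
  · fin_cases i
    · suffices u.map MvPolynomial.C * (genericForm a b c - c.map MvPolynomial.C) -
          b.map MvPolynomial.C * genericForm (-v) u 0 = C (MvPolynomial.X 0) by
        simpa [inverseSubstitution, substitution]
      simp only [genericForm, Polynomial.map_neg, Polynomial.map_zero]
      linear_combination C (MvPolynomial.X 0) * h
    · suffices v.map MvPolynomial.C * (genericForm a b c - c.map MvPolynomial.C) +
          a.map MvPolynomial.C * genericForm (-v) u 0 = C (MvPolynomial.X 1) by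
        simpa [inverseSubstitution, substitution]
      simp only [genericForm, Polynomial.map_neg, Polynomial.map_zero]
      linear_combination C (MvPolynomial.X 1) * h
  · simp [inverseSubstitution, substitution]

theorem inverseSubstitution_comp_substitution (huv : u * a + v * b = 1) :
    (inverseSubstitution a b c u v).comp (substitution a b c u v) = RingHom.id _ := by
  have h : (C (C u) : F[X][Y][X]) * C (C a) + C (C v) * C (C b) = 1 := by
    simpa using congrArg (fun r => (C (C r) : F[X][Y][X])) huv
  refine ringHom_ext' (ringHom_ext' (ringHom_ext' ?_ ?_) ?_) ?_
  · ext; simp [substitution, inverseSubstitution]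
  · simp [substitution, inverseSubstitution]
  · suffices inverseSubstitution a b c u v (genericForm a b c) = C X by simpa [substitution]
    calc inverseSubstitution a b c u v (genericForm a b c)
        = (C X - C (C c)) * (C (C u) * C (C a) + C (C v) * C (C b)) + C (C c) := by
          simp only [inverseSubstitution_genericForm, C_mul, C_sub]
          ring
      _ = C X := by rw [h]; ring
  · suffices inverseSubstitution a b c u v (genericForm (-v) u 0) = X by simpa [substitution]
    calc inverseSubstitution a b c u v (genericForm (-v) u 0)
        = X * (C (C u) * C (C a) + C (C v) * C (C b)) := by
          simp only [inverseSubstitution_genericForm, C_mul, C_sub, C_neg, C_0]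
          ring
      _ = X := by rw [h, mul_one]

variable {a b} in
theorem exists_ringEquiv_C_eq_genericValue (hab : IsCoprime a b) :
    ∃ e : F[X][Y][X] ≃+* (MvPolynomial (Fin 2) F)[X], ∀ f, e (C f) = genericValue a b c f := by
  obtain ⟨u, v, huv⟩ := hab
  exact ⟨RingEquiv.ofRingHom (substitution a b c u v) (inverseSubstitution a b c u v)
    (substitution_comp_inverseSubstitution a b c huv)
    (inverseSubstitution_comp_substitution a b c huv), substitution_C a b c u v⟩

theorem derivative_genericForm : derivative (genericForm a b c) =
    genericForm (derivative a) (derivative b) (derivative c) := by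
  simp [genericForm, derivative_map]

theorem derivative_genericValue (h : F[X][Y]) : derivative (genericValue a b c h) =
    genericValue a b c (innerDerivative h) + genericValue a b c (derivative h) *
      genericForm (derivative a) (derivative b) (derivative c) := by
  rw [genericValue, derivative_eval₂_mapRingHom, derivative_genericForm, genericValue,
    genericValue]

end CommRing

section IsDomain

variable [CommRing F] [IsDomain F] {a b c : F[X]} {f : F[X][Y]}

theorem squarefree_genericValue (hab : IsCoprime a b) (hf : Squarefree f) :
    Squarefree (genericValue a b c f) := by
  obtain ⟨e, he⟩ := exists_ringEquiv_C_eq_genericValue c hab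
  exact he f ▸ squarefree_map_mulEquiv e.toMulEquiv (squarefree_C hf)

theorem exists_irreducible_genericValue_eq (hab : IsCoprime a b) (hf : f ≠ 0)
    {P : (MvPolynomial (Fin 2) F)[X]} (hP : Irreducible P) (hPf : P ∣ genericValue a b c f) :
    ∃ h, Irreducible h ∧ genericValue a b c h = P := by
  obtain ⟨e, he⟩ := exists_ringEquiv_C_eq_genericValue c hab
  have hPC : e.symm P ∣ C f := by
    rw [← he] at hPf
    simpa only [RingEquiv.symm_apply_apply] using map_dvd e.symm hPf
  obtain ⟨h, hh⟩ := natDegree_eq_zero.mp (natDegree_eq_zero_of_dvd_C hf hPC)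
  refine ⟨h, ?_, ?_⟩
  · have hCh : Irreducible (C h) := hh ▸ (MulEquiv.irreducible_iff e.symm).mpr hP
    exact hCh.of_map
  · rw [← he, hh, e.apply_symm_apply]

theorem partial_derivatives_eq_zero_of_derivative_genericValue_eq_zero
    (hab : IsCoprime a b) (hW : wronskian a b ≠ 0) {h : F[X][Y]}
    (hh : derivative (genericValue a b c h) = 0) :
    innerDerivative h = 0 ∧ derivative h = 0 := by
  obtain ⟨u, v, huv⟩ := hab
  have hinv (f : F[X][Y]) : inverseSubstitution a b c u v (genericValue a b c f) = C f := by
    rw [← substitution_C a b c u v]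
    exact DFunLike.congr_fun (inverseSubstitution_comp_substitution a b c huv) (C f)
  have hchain := congrArg (inverseSubstitution a b c u v) (derivative_genericValue a b c h)
  simp only [hh, map_zero, map_add, map_mul, hinv, inverseSubstitution_genericForm] at hchain
  have hx : derivative h = 0 := by
    -- In the coordinates `x, y` the chain rule is affine in `y`, of slope `h_x (a b′ - a′ b)`.
    have hcoeff : 0 = derivative h * (C (derivative a) * -C b + C (derivative b) * C a) := by
      simpa only [coeff_zero, coeff_add, coeff_C_succ, coeff_C_mul, coeff_sub, coeff_X_one,
        zero_add, add_zero, zero_sub, mul_neg, mul_one, mul_zero] using congrArg (coeff · 1) hchain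
    have hW' : C (derivative a) * -C b + C (derivative b) * C a = C (wronskian a b) := by
      simp only [wronskian, C_sub, C_mul]
      ring
    rw [hW', eq_comm, mul_eq_zero, C_eq_zero] at hcoeff
    exact hcoeff.resolve_right hW
  simpa [hx] using hchain.symm

end IsDomain

theorem resultant_genericValue_derivative_ne_zero [Field F] (p : ℕ) [Fact p.Prime] [CharP F p]
    [PerfectRing F p] {a b c : F[X]} {f : F[X][Y]} (hab : IsCoprime a b) (hf : Squarefree f)
    (H : (genericValue a b c f).natDegree < p ∨ wronskian a b ≠ 0) :
    resultant (genericValue a b c f) (derivative (genericValue a b c f)) ≠ 0 := by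
  have hg := squarefree_genericValue (c := c) hab hf
  refine resultant_derivative_ne_zero_of_squarefree hg fun P hP hPg hP' => ?_
  rcases H with hdeg | hW
  · exact natDegree_eq_zero_of_derivative_eq_zero_of_lt p
      ((natDegree_le_of_dvd hPg hg.ne_zero).trans_lt hdeg) hP'
  · obtain ⟨h, hh, rfl⟩ := exists_irreducible_genericValue_eq hab hf.ne_zero hP hPg
    obtain ⟨ht, hx⟩ :=
      partial_derivatives_eq_zero_of_derivative_genericValue_eq_zero hab hW hP'
    exact absurd hh (not_irreducible_of_partial_derivatives_eq_zero p ht hx)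

end GenericValue

theorem algebraMap_mem_closure_of_derivative_eq_zero {F : Type*} [Field F] {p : ℕ} [CharP F p]
    (hp : p ≠ 0) {r : F[X]} (hr : derivative r = 0) :
    algebraMap F[X] (RatFunc F) r ∈
      Subfield.closure (Set.range (RatFunc.C (K := F)) ∪ {RatFunc.X ^ p}) := by
  rw [← expand_contract p hr hp, expand_eq_sum, Polynomial.sum, map_sum]
  refine Subfield.sum_mem _ fun i _ => ?_
  rw [map_mul, map_pow, map_pow, RatFunc.algebraMap_C, RatFunc.algebraMap_X]
  refine Subfield.mul_mem _ ?_ (Subfield.pow_mem _ ?_ _)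
  · exact Subfield.subset_closure (Or.inl ⟨_, rfl⟩)
  · exact Subfield.subset_closure (Or.inr rfl)

theorem wronskian_ne_zero_of_notInFtp {F : Type*} [Field F] (hF : ringChar F ≠ 0)
    {a b : F[X]} (hab : IsCoprime a b) (h : notInFtp F a b) : wronskian a b ≠ 0 := by
  intro hW
  obtain ⟨ha, hb⟩ := hab.wronskian_eq_zero_iff.mp hW
  exact h (Subfield.div_mem _ (algebraMap_mem_closure_of_derivative_eq_zero hF hb)
    (algebraMap_mem_closure_of_derivative_eq_zero hF ha))

end SquarefreeValues

/-- For every `N` there are constants `C N` and `C' N` such that for every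
finite field `F_q` of characteristic `p`, every square-free `f ∈ F_q[t][x]` with
`deg_x f, deg_t f ≤ N`, and all `a, b, c ∈ F_q[t]` of degree at most `N` with `gcd(a,b) = 1`,
if `p > C N` or (`a ≠ 0` and `b/a ∉ F_q(t^p)`), then the number of pairs `(β₁, β₂) ∈ F_q²`
for which `f(t, a(t)β₁ + b(t)β₂ + c(t))` is not square-free is at most `C' N · q`; in
particular if `q > C' N` there exist `β₁, β₂` making the value square-free. -/
theorem squarefree_values_univariate_linear_sparse (N : ℕ) :
    ∃ C C' : ℕ, ∀ (F : Type) [Field F] [Fintype F],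
      ∀ (f : Polynomial (Polynomial F)) (a b c : Polynomial F),
        Squarefree f →
        f.natDegree ≤ N → (∀ i, (f.coeff i).natDegree ≤ N) →
        IsRelPrime a b →
        a.natDegree ≤ N → b.natDegree ≤ N → c.natDegree ≤ N →
        (C < ringChar F ∨ (a ≠ 0 ∧ notInFtp F a b)) →
        Set.ncard {β : F × F |
            ¬ Squarefree (Polynomial.eval (a * Polynomial.C β.1 + b * Polynomial.C β.2 + c) f)}
            ≤ C' * Fintype.card F ∧
        (C' < Fintype.card F →
          ∃ β₁ β₂ : F,
            Squarefree (Polynomial.eval (a * Polynomial.C β₁ + b * Polynomial.C β₂ + c) f)) := by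
  refine ⟨N + N * N, N + (N + N * N + (N + N * N)) * N, ?_⟩
  intro F _ _ f a b c hf hfx hft hrel ha hb hc H
  have hab : IsCoprime a b := isRelPrime_iff_isCoprime.mp hrel
  have : Fact (ringChar F).Prime := ⟨CharP.char_is_prime F (ringChar F)⟩
  have hdeg := SquarefreeValues.natDegree_genericValue_le hfx hft
    (SquarefreeValues.natDegree_genericForm_le ha hb hc)
  have hres := SquarefreeValues.resultant_genericValue_derivative_ne_zero (ringChar F) (c := c)
    hab hf (H.imp hdeg.trans_lt fun h =>
      SquarefreeValues.wronskian_ne_zero_of_notInFtp (NeZero.ne _) hab h.2)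
  have hbound := SquarefreeValues.ncard_not_squarefree_map_eval_le
    (SquarefreeValues.squarefree_genericValue hab hf).ne_zero
    (SquarefreeValues.coeffTotalDegreeLE_genericValue a b c hfx) hdeg hres
  simp only [SquarefreeValues.map_eval_genericValue] at hbound
  refine ⟨hbound, fun hq => ?_⟩
  obtain ⟨β, hβ⟩ := SquarefreeValues.exists_notMem_of_ncard_le_mul_card hbound hq
  exact ⟨β.1, β.2, not_not.mp hβ⟩
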